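/- arXiv:2406.02971 — 4 statements merged into one kernel-verified Lean document; each statement's English description precedes it below -/
import Mathlib

section
/- Every nonempty word w has a most frequent subword u (that is, a word u with occ(w,u) = maxocc(w)) whose first letter equals the first letter of w and whose last letter equals the last letter of w. -/
/-!
Let `a` be the first letter of `w`. If `u` does not start with `a`, then no occurrence of `u` in `w`
uses the first position, so adding that position turns occurrences of `u` injectively into
occurrences of `a :: u`. Reversing words gives the same for last letters. Hence every word can be
corrected at both ends without becoming less frequent, in particular a most frequent one.
-/

open List Real

/-- `occ w u` is the number of occurrences of `u` as a subword (subsequence) of `w`,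
i.e. the multiplicity of `u` among the `2^|w|` sublists of `w`. -/
def occ {α : Type*} [DecidableEq α] (w u : List α) : ℕ := w.sublists.count u

/-- `maxocc w` is the maximal number of occurrences of any subword of `w`. -/
noncomputable def maxocc {α : Type*} [DecidableEq α] (w : List α) : ℕ :=
  sSup {n : ℕ | ∃ u : List α, occ w u = n}

section Occurrences

variable {α : Type*} [DecidableEq α]

theorem occ_reverse (w u : List α) : occ w.reverse u.reverse = occ w u := by
  simp only [occ, sublists_reverse, count_map_of_injective _ reverse reverse_injective,
    (sublists_perm_sublists' w).count_eq]

theorem occ_cons (a : α) (v u : List α) :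
    occ (a :: v) u = occ v u + (v.sublists.map (cons a)).count u := by
  rw [occ, occ, (sublists_cons_perm_append a v).count_eq, count_append]

theorem occ_cons_cons_self (a : α) (v u : List α) :
    occ (a :: v) (a :: u) = occ v (a :: u) + occ v u := by
  rw [occ_cons, count_map_of_injective _ _ cons_injective, ← occ]

theorem occ_cons_of_head?_ne {a : α} (v : List α) {u : List α} (hu : u.head? ≠ some a) :
    occ (a :: v) u = occ v u := by
  have not_mem : u ∉ v.sublists.map (cons a) := fun h ↦ by
    obtain ⟨x, -, rfl⟩ := mem_map.mp h
    exact hu head?_cons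
  rw [occ_cons, count_eq_zero_of_not_mem not_mem, add_zero]

theorem occ_le_occ_cons {a : α} (v : List α) {u : List α} (hu : u.head? ≠ some a) :
    occ (a :: v) u ≤ occ (a :: v) (a :: u) := by
  rw [occ_cons_of_head?_ne v hu, occ_cons_cons_self]
  exact Nat.le_add_left _ _

theorem occ_le_occ_concat {b : α} (v : List α) {u : List α} (hu : u.getLast? ≠ some b) :
    occ (v ++ [b]) u ≤ occ (v ++ [b]) (u ++ [b]) := by
  rw [← occ_reverse _ u, ← occ_reverse _ (u ++ [b]), reverse_concat, reverse_concat]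
  exact occ_le_occ_cons v.reverse (by rwa [head?_reverse])

theorem exists_occ_le_and_head?_eq (w u : List α) :
    ∃ u', occ w u ≤ occ w u' ∧ u'.head? = w.head? := by
  cases w with
  | nil => exact ⟨[], by simpa [occ] using count_le_length (a := u) (l := [[]]), rfl⟩
  | cons a v =>
    by_cases hu : u.head? = some a
    · exact ⟨u, le_rfl, hu⟩
    · exact ⟨a :: u, occ_le_occ_cons v hu, rfl⟩

theorem exists_occ_le_and_head?_eq_and_getLast?_eq (w u : List α) :
    ∃ u', occ w u ≤ occ w u' ∧ u'.head? = w.head? ∧ u'.getLast? = w.getLast? := by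
  obtain ⟨u₁, hle, hhead⟩ := exists_occ_le_and_head?_eq w u
  by_cases hlast : u₁.getLast? = w.getLast?
  · exact ⟨u₁, hle, hhead, hlast⟩
  obtain rfl | ⟨v, b, rfl⟩ := eq_nil_or_concat' w
  · simp_all
  have u₁_ne_nil : u₁ ≠ [] := by
    rintro rfl
    simp at hhead
  rw [getLast?_concat] at hlast
  refine ⟨u₁ ++ [b], hle.trans (occ_le_occ_concat v hlast), ?_, ?_⟩
  · rw [head?_append_of_ne_nil _ u₁_ne_nil, hhead]
  · rw [getLast?_concat, getLast?_concat]

theorem bddAbove_range_occ (w : List α) : BddAbove (Set.range (occ w)) :=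
  ⟨w.sublists.length, Set.forall_mem_range.mpr fun _ ↦ count_le_length⟩

theorem isGreatest_maxocc (w : List α) : IsGreatest (Set.range (occ w)) (maxocc w) :=
  ⟨Nat.sSup_mem (Set.range_nonempty _) (bddAbove_range_occ w),
    fun _ ↦ le_csSup (bddAbove_range_occ w)⟩

end Occurrences

theorem stmt_1 {α : Type*} [DecidableEq α] (w : List α) (hw : w ≠ []) :
    ∃ u : List α, occ w u = maxocc w ∧ u.head? = w.head? ∧ u.getLast? = w.getLast? := by
  obtain ⟨⟨u, hu⟩, occ_le⟩ := isGreatest_maxocc w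
  obtain ⟨u', hle, hhead, hlast⟩ := exists_occ_le_and_head?_eq_and_getLast?_eq w u
  exact ⟨u', le_antisymm (occ_le ⟨u', rfl⟩) (hu ▸ hle), hhead, hlast⟩
end

section
/- For every n ≥ 1 and every word w of length n, maxocc(w) ≤ C(n, ⌈n/2⌉) (the binomial coefficient), and equality holds if and only if all letters of w are equal, i.e., w = aⁿ for some letter a. -/
/-!
Let `n = |w|` and `k = |u|`. The sublists of `w` of length `k`, counted with multiplicity, are
`C(n, k)` in number, and `occ w u` counts those equal to `u`. So `occ w u ≤ C(n, k) ≤ C(n, ⌈n/2⌉)`,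
and `occ w u = C(n, k)` exactly when every sublist of `w` of length `k` is `u`. If `0 < k < n`, this
makes any two consecutive letters `a`, `b` of `w` equal: adding either one to the same `k - 1` other
positions gives two sublists, both equal to `u`, that differ at most in this letter. For `n ≥ 2` a
maximizing `u` does satisfy `0 < k < n`, because `C(n, ⌈n/2⌉) ≥ C(n, 1) > 1`.
-/

open List Real

section Binomial

theorem choose_le_choose_ceil_half (n k : ℕ) : n.choose k ≤ n.choose ((n + 1) / 2) := by
  rw [Nat.choose_symm_of_eq_add (show n = (n + 1) / 2 + n / 2 by lia)]
  exact Nat.choose_le_middle k n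

theorem one_lt_choose_ceil_half {n : ℕ} (hn : 1 < n) : 1 < n.choose ((n + 1) / 2) :=
  calc
    1 < n.choose 1 := by rwa [Nat.choose_one_right]
    _ ≤ n.choose ((n + 1) / 2) := choose_le_choose_ceil_half n 1

theorem pos_and_lt_of_one_lt_choose {n k : ℕ} (h : 1 < n.choose k) : 0 < k ∧ k < n := by
  have hle : k ≤ n := Nat.choose_ne_zero_iff.1 (by lia)
  have hne : ¬(k = 0 ∨ n = k) := Nat.choose_eq_one_iff.not.1 h.ne'
  lia

end Binomial

section Sublists

variable {α : Type*}

theorem filter_length_eq_sublists' (k : ℕ) (w : List α) :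
    w.sublists'.filter (·.length = k) = sublistsLen k w := by
  induction w generalizing k with
  | nil => cases k <;> simp
  | cons a w ih =>
    cases k with
    | zero => simpa [filter_map, Function.comp_def] using ih 0
    | succ k => simp [filter_map, Function.comp_def, ih]

theorem isChain_eq_of_forall_sublist_eq {w u : List α} (hpos : 0 < u.length)
    (hlt : u.length < w.length) (h : ∀ v, v <+ w → v.length = u.length → v = u) :
    w.IsChain (· = ·) := by
  refine isChain_iff_forall_rel_of_append_cons_cons.2 fun {a b l r} hw => ?_
  subst hw
  simp only [length_append, length_cons] at hlt
  obtain ⟨s, t, hst, hs, ht⟩ := sublist_append_iff.1 (take_sublist (u.length - 1) (l ++ r))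
  have hlen : (s ++ t).length = u.length - 1 := by
    rw [← hst, length_take, length_append]
    lia
  rw [length_append] at hlen
  have ha : s ++ a :: t = u :=
    h _ (hs.append ((ht.cons b).cons_cons a)) (by rw [length_append, length_cons]; lia)
  have hb : s ++ b :: t = u :=
    h _ (hs.append ((ht.cons_cons b).cons a)) (by rw [length_append, length_cons]; lia)
  exact (cons.inj (append_cancel_left (ha.trans hb.symm))).1

end Sublists

section Occ

variable {α : Type*} [DecidableEq α]

theorem occ_eq_count_sublistsLen (w u : List α) :
    occ w u = (sublistsLen u.length w).count u := by
  rw [← filter_length_eq_sublists', count_filter (by simp)]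
  exact (sublists_perm_sublists' w).count_eq u

theorem occ_le_choose (w u : List α) : occ w u ≤ w.length.choose u.length := by
  rw [occ_eq_count_sublistsLen, ← length_sublistsLen]
  exact count_le_length

theorem occ_eq_choose_iff {w u : List α} :
    occ w u = w.length.choose u.length ↔ ∀ v, v <+ w → v.length = u.length → v = u := by
  rw [occ_eq_count_sublistsLen, ← length_sublistsLen, count_eq_length]
  simp only [mem_sublistsLen, and_imp, eq_comm (a := u)]

theorem occ_replicate (a : α) (n k : ℕ) :
    occ (replicate n a) (replicate k a) = n.choose k := by
  suffices h : ∀ v, v <+ replicate n a → v.length = (replicate k a).length → v = replicate k a by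
    simpa only [length_replicate] using occ_eq_choose_iff.2 h
  intro v hv hlen
  obtain ⟨m, -, rfl⟩ := sublist_replicate_iff.1 hv
  simp_all only [length_replicate]

theorem exists_eq_replicate_of_occ_eq_choose {w u : List α} (hpos : 0 < u.length)
    (hlt : u.length < w.length) (h : occ w u = w.length.choose u.length) :
    ∃ a, w = replicate w.length a := by
  have hne : w ≠ [] := ne_nil_of_length_pos (by lia)
  have hchain := isChain_eq_of_forall_sublist_eq hpos hlt (occ_eq_choose_iff.1 h)
  exact ⟨w.head hne, isChain_eq_iff_eq_replicate.1 hchain _ (head_mem_head? hne)⟩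

end Occ

section Maxocc

variable {α : Type*} [DecidableEq α]

theorem occ_le_choose_ceil_half (w u : List α) :
    occ w u ≤ w.length.choose ((w.length + 1) / 2) :=
  (occ_le_choose w u).trans (choose_le_choose_ceil_half _ _)

theorem maxocc_le_choose_ceil_half (w : List α) :
    maxocc w ≤ w.length.choose ((w.length + 1) / 2) := by
  obtain ⟨u, hu⟩ := (isGreatest_maxocc w).1
  exact hu ▸ occ_le_choose_ceil_half w u

theorem maxocc_replicate (n : ℕ) (a : α) :
    maxocc (replicate n a) = n.choose ((n + 1) / 2) := by
  refine le_antisymm (by simpa using maxocc_le_choose_ceil_half (replicate n a)) ?_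
  rw [← occ_replicate a]
  exact (isGreatest_maxocc _).2 ⟨_, rfl⟩

theorem exists_eq_replicate_of_maxocc_eq {w : List α} (hw : w ≠ [])
    (h : maxocc w = w.length.choose ((w.length + 1) / 2)) :
    ∃ a, w = replicate w.length a := by
  obtain hone | hlong : w.length = 1 ∨ 1 < w.length := by
    have := length_pos_of_ne_nil hw
    lia
  · obtain ⟨a, rfl⟩ := length_eq_one_iff.1 hone
    exact ⟨a, rfl⟩
  · obtain ⟨u, hu⟩ := (isGreatest_maxocc w).1
    have hocc : occ w u = w.length.choose u.length :=
      (occ_le_choose w u).antisymm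
        ((choose_le_choose_ceil_half _ _).trans_eq (hu.trans h).symm)
    have hchoose : 1 < w.length.choose u.length := by
      rw [← hocc, hu, h]
      exact one_lt_choose_ceil_half hlong
    obtain ⟨hpos, hlt⟩ := pos_and_lt_of_one_lt_choose hchoose
    exact exists_eq_replicate_of_occ_eq_choose hpos hlt hocc

end Maxocc

theorem stmt_2 {α : Type*} [DecidableEq α] (n : ℕ) (hn : 1 ≤ n) (w : List α)
    (hw : w.length = n) :
    maxocc w ≤ n.choose ((n + 1) / 2) ∧
      (maxocc w = n.choose ((n + 1) / 2) ↔ ∃ a : α, w = List.replicate n a) := by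
  subst hw
  refine ⟨maxocc_le_choose_ceil_half w, exists_eq_replicate_of_maxocc_eq (length_pos_iff.1 hn), ?_⟩
  rintro ⟨a, ha⟩
  rw [ha, maxocc_replicate, length_replicate]
end

section
/- For every k ≥ 2 there exist real constants c₁, c₂ such that for all n ≥ 1 and every word w of length n over an alphabet of size k: log₂(1 + 1/k) · n − (1/2)·log₂ n + c₁ ≤ minS_k(n) ≤ S(w) ≤ n − (1/2)·log₂ n + c₂. -/
/-!
The `n.choose m` position sets of size `m` in a word of length `n` are distributed among the words
of length `m`.

*Upper bound.* Each word of length `m` therefore occurs at most `n.choose m` times, and the middle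
binomial coefficient is at most `2 ^ n / √n`.

*Lower bound.* Over `k` letters there are `k ^ m` words of length `m`, so by pigeonhole one of them
occurs at least `n.choose m / k ^ m` times. These numbers are the terms of the binomial expansion of
`(1 + 1 / k) ^ n`. By Chebyshev's inequality three quarters of that sum come from the at most `3 √n`
terms within `√n` of the mean, so the largest term is at least `(1 + 1 / k) ^ n / (4 √n)`.
-/

open List Real

/-- `minS k n` is the minimal subword entropy `log₂ (maxocc w)` over words `w`
of length `n` over the alphabet `Fin k`. -/
noncomputable def minS (k n : ℕ) : ℝ :=
  sInf {s : ℝ | ∃ w : List (Fin k), w.length = n ∧ s = Real.logb 2 (maxocc w)}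

section Occurrences

variable {α : Type*} [DecidableEq α]

theorem count_cons_map_cons (a b : α) (u : List α) (L : List (List α)) :
    (L.map (cons a)).count (b :: u) = if a = b then L.count u else 0 := by
  split_ifs with hab
  · rw [← hab, List.count_map_of_injective L _ List.cons_injective]
  · simp [List.count_eq_zero, hab]

theorem sum_occ_eq_choose [Fintype α] (w : List α) (m : ℕ) :
    ∑ v : List.Vector α m, occ w v.toList = w.length.choose m := by
  let words : Finset (List α) :=
    (Finset.univ : Finset (List.Vector α m)).map
      ⟨List.Vector.toList, List.Vector.toList_injective⟩
  have mem_words : ∀ u ∈ (sublistsLen m w : Multiset (List α)), u ∈ words := fun u hu =>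
    Finset.mem_map.2 ⟨⟨u, length_of_sublistsLen hu⟩, Finset.mem_univ _, rfl⟩
  calc ∑ v : List.Vector α m, occ w v.toList
      = ∑ u ∈ words, Multiset.count u (sublistsLen m w) := by
        simp only [words, Finset.sum_map, Function.Embedding.coeFn_mk, occ_eq_count_sublistsLen,
          List.Vector.toList_length, Multiset.coe_count]
        -- The two sides differ only in the boolean equality on `List α`.
        congr!
    _ = w.length.choose m := by
        rw [Multiset.sum_count_eq_card mem_words, Multiset.coe_card, length_sublistsLen]

theorem bddAbove_occ (w : List α) : BddAbove {n : ℕ | ∃ u : List α, occ w u = n} := by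
  refine ⟨w.sublists.length, ?_⟩
  rintro _ ⟨u, rfl⟩
  exact List.count_le_length

theorem occ_le_maxocc (w u : List α) : occ w u ≤ maxocc w :=
  le_csSup (bddAbove_occ w) ⟨u, rfl⟩

theorem exists_occ_eq_maxocc (w : List α) : ∃ u, occ w u = maxocc w :=
  Nat.sSup_mem (s := {n : ℕ | ∃ u : List α, occ w u = n}) ⟨_, [], rfl⟩ (bddAbove_occ w)

theorem maxocc_pos (w : List α) : 0 < maxocc w :=
  calc 0 < occ w [] := by simp [occ_eq_count_sublistsLen]
    _ ≤ maxocc w := occ_le_maxocc w []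

theorem choose_le_card_pow_mul_maxocc [Fintype α] (w : List α) (m : ℕ) :
    w.length.choose m ≤ Fintype.card α ^ m * maxocc w :=
  calc w.length.choose m = ∑ v : List.Vector α m, occ w v.toList := (sum_occ_eq_choose w m).symm
    _ ≤ ∑ _v : List.Vector α m, maxocc w := Finset.sum_le_sum fun v _ => occ_le_maxocc w v.toList
    _ = Fintype.card α ^ m * maxocc w := by simp [card_vector]

end Occurrences

section BinomialUpperBound

theorem centralBinom_sq_mul_le (m : ℕ) : m.centralBinom ^ 2 * (2 * m + 1) ≤ 4 ^ (2 * m) := by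
  induction m with
  | zero => simp
  | succ m ih =>
    refine Nat.le_of_mul_le_mul_left ?_ (pow_pos m.succ_pos 2)
    calc (m + 1) ^ 2 * ((m + 1).centralBinom ^ 2 * (2 * (m + 1) + 1))
        = ((m + 1) * (m + 1).centralBinom) ^ 2 * (2 * m + 3) := by ring
      _ = 4 * ((2 * m + 1) * (2 * m + 3)) * (m.centralBinom ^ 2 * (2 * m + 1)) := by
          rw [Nat.succ_mul_centralBinom_succ]; ring
      _ ≤ 4 * (4 * (m + 1) ^ 2) * 4 ^ (2 * m) := by
          gcongr ?_ * ?_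
          linarith
      _ = (m + 1) ^ 2 * 4 ^ (2 * (m + 1)) := by ring

theorem centralBinom_succ_eq_two_mul_choose (m : ℕ) :
    (m + 1).centralBinom = 2 * (2 * m + 1).choose m := by
  rw [Nat.centralBinom_eq_two_mul_choose, mul_add_one, Nat.choose_succ_succ, Nat.choose_symm_half,
    ← two_mul]

theorem choose_half_sq_mul_le (n : ℕ) : n.choose (n / 2) ^ 2 * n ≤ 4 ^ n := by
  obtain ⟨m, rfl | rfl⟩ := n.even_or_odd'
  · rw [Nat.mul_div_cancel_left m two_pos, ← Nat.centralBinom_eq_two_mul_choose]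
    exact (Nat.mul_le_mul_left _ (Nat.le_succ _)).trans (centralBinom_sq_mul_le m)
  · have half_eq : (2 * m + 1) / 2 = m := by lia
    have next_row := centralBinom_sq_mul_le (m + 1)
    rw [centralBinom_succ_eq_two_mul_choose] at next_row
    rw [half_eq]
    refine Nat.le_of_mul_le_mul_left ?_ four_pos
    calc 4 * ((2 * m + 1).choose m ^ 2 * (2 * m + 1))
        ≤ (2 * (2 * m + 1).choose m) ^ 2 * (2 * (m + 1) + 1) := by rw [mul_pow]; lia
      _ ≤ 4 ^ (2 * (m + 1)) := next_row
      _ = 4 * 4 ^ (2 * m + 1) := by ring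

theorem choose_mul_sqrt_le_two_pow (n j : ℕ) : n.choose j * √(n : ℝ) ≤ 2 ^ n := by
  have middle_le : ((n.choose (n / 2) : ℝ)) ^ 2 * n ≤ 4 ^ n := mod_cast choose_half_sq_mul_le n
  refine le_of_sq_le_sq ?_ (by positivity)
  calc (n.choose j * √(n : ℝ)) ^ 2 = (n.choose j : ℝ) ^ 2 * n := by
        rw [mul_pow, Real.sq_sqrt n.cast_nonneg]
    _ ≤ (n.choose (n / 2) : ℝ) ^ 2 * n := by gcongr; exact Nat.choose_le_middle j n
    _ ≤ 4 ^ n := middle_le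
    _ = (2 ^ n) ^ 2 := by rw [← pow_mul, mul_comm, pow_mul]; norm_num

end BinomialUpperBound

section BinomialLowerBound

theorem sum_sub_sum_sq_mul_div_le_sum_filter {ι : Type*} {s : Finset ι} {p : ι → ℝ}
    (hp : ∀ i ∈ s, 0 ≤ p i) (f : ι → ℝ) {t : ℝ} (ht : 0 < t) :
    ∑ i ∈ s, p i - (∑ i ∈ s, f i ^ 2 * p i) / t ^ 2 ≤ ∑ i ∈ s with |f i| < t, p i := by
  rw [Finset.sum_div, ← Finset.sum_sub_distrib, Finset.sum_filter]
  refine Finset.sum_le_sum fun i hi => ?_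
  have hpi := hp i hi
  split_ifs with hfi
  · exact sub_le_self _ (by positivity)
  · have sq_le : t ^ 2 ≤ f i ^ 2 := by
      rw [← sq_abs (f i)]
      exact pow_le_pow_left₀ ht.le (not_lt.1 hfi) 2
    rw [sub_nonpos, le_div_iff₀ (by positivity), mul_comm]
    exact mul_le_mul_of_nonneg_right sq_le hpi

theorem card_le_of_forall_abs_sub_le {s : Finset ℕ} {c t : ℝ} (ht : 0 ≤ t)
    (hs : ∀ j ∈ s, |c - j| ≤ t) : (s.card : ℝ) ≤ 2 * t + 1 := by
  rcases s.eq_empty_or_nonempty with rfl | hne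
  · simp only [Finset.card_empty, Nat.cast_zero]
    positivity
  have subset_Icc : s ⊆ Finset.Icc (s.min' hne) (s.max' hne) := fun j hj =>
    Finset.mem_Icc.2 ⟨s.min'_le j hj, s.le_max' j hj⟩
  have card_add_min_le : s.card + s.min' hne ≤ s.max' hne + 1 := by
    have card_le := Finset.card_le_card subset_Icc
    have := s.min'_le_max' hne
    rw [Nat.card_Icc] at card_le
    lia
  have cast_card_add_min_le : (s.card : ℝ) + s.min' hne ≤ s.max' hne + 1 := mod_cast card_add_min_le
  have := abs_le.1 (hs _ (s.min'_mem hne))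
  have := abs_le.1 (hs _ (s.max'_mem hne))
  linarith

theorem sum_choose_mul_pow_mul_one_sub_pow (n : ℕ) (x : ℝ) :
    ∑ j ∈ Finset.range (n + 1), n.choose j * x ^ j * (1 - x) ^ (n - j) = 1 := by
  simpa [Polynomial.eval_finsetSum, bernsteinPolynomial] using
    congrArg (Polynomial.eval x) (bernsteinPolynomial.sum ℝ n)

theorem variance_choose_mul_pow_mul_one_sub_pow (n : ℕ) (x : ℝ) :
    ∑ j ∈ Finset.range (n + 1), (n * x - j) ^ 2 * (n.choose j * x ^ j * (1 - x) ^ (n - j)) =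
      n * x * (1 - x) := by
  simpa [Polynomial.eval_finsetSum, bernsteinPolynomial] using
    congrArg (Polynomial.eval x) (bernsteinPolynomial.variance ℝ n)

theorem exists_one_le_sqrt_mul_choose_mul_pow_mul_one_sub_pow {n : ℕ} (hn : n ≠ 0) {x : ℝ}
    (hx₀ : 0 ≤ x) (hx₁ : x ≤ 1) :
    ∃ j ≤ n, 1 ≤ 4 * √(n : ℝ) * (n.choose j * x ^ j * (1 - x) ^ (n - j)) := by
  set p : ℕ → ℝ := fun j => n.choose j * x ^ j * (1 - x) ^ (n - j)
  have p_nonneg (j : ℕ) : 0 ≤ p j := by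
    have := sub_nonneg.2 hx₁
    positivity
  have n_pos : (0 : ℝ) < n := by positivity
  have one_le_sqrt : 1 ≤ √(n : ℝ) := Real.one_le_sqrt.2 (mod_cast Nat.one_le_iff_ne_zero.2 hn)
  let window := (Finset.range (n + 1)).filter fun j : ℕ => |n * x - j| < √(n : ℝ)
  have window_mass : 3 / 4 ≤ ∑ j ∈ window, p j := by
    have chebyshev := sum_sub_sum_sq_mul_div_le_sum_filter
      (s := Finset.range (n + 1)) (fun j _ => p_nonneg j) (fun j => n * x - j)
      (Real.sqrt_pos.2 n_pos)
    rw [sum_choose_mul_pow_mul_one_sub_pow, variance_choose_mul_pow_mul_one_sub_pow,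
      Real.sq_sqrt n_pos.le, mul_assoc, mul_div_cancel_left₀ _ n_pos.ne'] at chebyshev
    linarith [sq_nonneg (x - 1 / 2)]
  have window_card : (window.card : ℝ) ≤ 2 * √(n : ℝ) + 1 :=
    card_le_of_forall_abs_sub_le (Real.sqrt_nonneg _) fun j hj => (Finset.mem_filter.1 hj).2.le
  obtain ⟨j, hj, p_le⟩ :=
    Finset.exists_max_image (Finset.range (n + 1)) p Finset.nonempty_range_add_one
  refine ⟨j, Finset.mem_range_succ_iff.1 hj, ?_⟩
  have window_mass_le : ∑ i ∈ window, p i ≤ 3 * √(n : ℝ) * p j :=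
    calc ∑ i ∈ window, p i ≤ window.card * p j := by
          simpa using Finset.sum_le_card_nsmul window p (p j)
            fun i hi => p_le i (Finset.mem_of_mem_filter i hi)
      _ ≤ 3 * √(n : ℝ) * p j :=
          mul_le_mul_of_nonneg_right (by linarith) (p_nonneg j)
  linarith

theorem exists_add_pow_le_sqrt_mul_choose_mul_pow {n : ℕ} (hn : n ≠ 0) {x y : ℝ} (hx : 0 ≤ x)
    (hy : 0 ≤ y) : ∃ j ≤ n, (x + y) ^ n ≤ 4 * √(n : ℝ) * (n.choose j * x ^ j * y ^ (n - j)) := by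
  rcases (add_nonneg hx hy).eq_or_lt with hxy | hxy
  · exact ⟨0, n.zero_le, by rw [← hxy, zero_pow hn]; positivity⟩
  obtain ⟨j, hj, one_le⟩ := exists_one_le_sqrt_mul_choose_mul_pow_mul_one_sub_pow hn
    (div_nonneg hx hxy.le) (div_le_one_of_le₀ (le_add_of_nonneg_right hy) hxy.le)
  have one_sub_eq : 1 - x / (x + y) = y / (x + y) := by field_simp; ring
  have split_pow : (x + y) ^ n = (x + y) ^ j * (x + y) ^ (n - j) := by
    rw [← pow_add, Nat.add_sub_cancel' hj]
  refine ⟨j, hj, ?_⟩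
  calc (x + y) ^ n
      ≤ (x + y) ^ n * (4 * √(n : ℝ) *
          (n.choose j * (x / (x + y)) ^ j * (y / (x + y)) ^ (n - j))) := by
        rw [← one_sub_eq]
        exact le_mul_of_one_le_right (by positivity) one_le
    _ = 4 * √(n : ℝ) * (n.choose j * x ^ j * y ^ (n - j)) := by
        rw [split_pow, div_pow, div_pow]
        field_simp

end BinomialLowerBound

section SubwordEntropy

variable {α : Type*} [DecidableEq α] {w : List α}

theorem maxocc_mul_sqrt_le_two_pow (w : List α) : maxocc w * √(w.length : ℝ) ≤ 2 ^ w.length := by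
  obtain ⟨u, hu⟩ := exists_occ_eq_maxocc w
  calc maxocc w * √(w.length : ℝ) ≤ w.length.choose u.length * √(w.length : ℝ) := by
        rw [← hu]
        gcongr
        exact occ_le_choose w u
    _ ≤ 2 ^ w.length := choose_mul_sqrt_le_two_pow _ _

theorem one_add_one_div_card_pow_le_sqrt_mul_maxocc [Fintype α] (hw : w ≠ []) :
    (1 + 1 / (Fintype.card α : ℝ)) ^ w.length ≤ 4 * √(w.length : ℝ) * maxocc w := by
  have : Nonempty α := ⟨w.head hw⟩
  have length_ne_zero : w.length ≠ 0 := mt List.length_eq_zero_iff.1 hw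
  obtain ⟨m, -, add_pow_le⟩ := exists_add_pow_le_sqrt_mul_choose_mul_pow length_ne_zero
    (x := 1 / Fintype.card α) (by positivity) zero_le_one
  have choose_le : (w.length.choose m : ℝ) ≤ Fintype.card α ^ m * maxocc w :=
    mod_cast choose_le_card_pow_mul_maxocc w m
  rw [add_comm]
  refine add_pow_le.trans ?_
  gcongr
  rw [one_pow, mul_one, one_div, inv_pow, ← div_eq_mul_inv]
  exact (div_le_iff₀' (by positivity)).2 choose_le

theorem logb_sqrt (b : ℝ) {x : ℝ} (hx : 0 ≤ x) : Real.logb b √x = 1 / 2 * Real.logb b x := by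
  rw [Real.logb, Real.log_sqrt hx, Real.logb]
  ring

theorem logb_maxocc_le (hw : w ≠ []) :
    Real.logb 2 (maxocc w) ≤ w.length - 1 / 2 * Real.logb 2 w.length := by
  have maxocc_cast_pos : (0 : ℝ) < maxocc w := mod_cast maxocc_pos w
  have sqrt_pos : 0 < √(w.length : ℝ) := Real.sqrt_pos.2 (mod_cast List.length_pos_iff.2 hw)
  have log_le := Real.logb_le_logb_of_le one_lt_two (by positivity) (maxocc_mul_sqrt_le_two_pow w)
  rw [Real.logb_mul maxocc_cast_pos.ne' sqrt_pos.ne', Real.logb_pow, logb_sqrt 2 (by positivity),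
    Real.logb_self_eq_one one_lt_two] at log_le
  linarith

theorem le_logb_maxocc [Fintype α] (hw : w ≠ []) :
    Real.logb 2 (1 + 1 / Fintype.card α) * w.length - 1 / 2 * Real.logb 2 w.length - 2 ≤
      Real.logb 2 (maxocc w) := by
  have maxocc_cast_pos : (0 : ℝ) < maxocc w := mod_cast maxocc_pos w
  have sqrt_pos : 0 < √(w.length : ℝ) := Real.sqrt_pos.2 (mod_cast List.length_pos_iff.2 hw)
  have logb_four : Real.logb 2 4 = 2 := by
    rw [show (4 : ℝ) = 2 ^ 2 by norm_num, Real.logb_pow, Real.logb_self_eq_one one_lt_two]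
    norm_num
  have log_le := Real.logb_le_logb_of_le one_lt_two (by positivity)
    (one_add_one_div_card_pow_le_sqrt_mul_maxocc hw)
  rw [Real.logb_pow, Real.logb_mul (by positivity) maxocc_cast_pos.ne',
    Real.logb_mul four_ne_zero sqrt_pos.ne', logb_four, logb_sqrt 2 (by positivity)] at log_le
  linarith

theorem minS_le_logb_maxocc {k : ℕ} (w : List (Fin k)) :
    minS k w.length ≤ Real.logb 2 (maxocc w) := by
  refine csInf_le ⟨0, ?_⟩ ⟨w, rfl, rfl⟩
  rintro _ ⟨v, -, rfl⟩
  exact Real.logb_nonneg one_lt_two (mod_cast maxocc_pos v)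

theorem le_minS {k n : ℕ} (hk : k ≠ 0) (hn : n ≠ 0) :
    Real.logb 2 (1 + 1 / k) * n - 1 / 2 * Real.logb 2 n - 2 ≤ minS k n := by
  refine le_csInf ⟨_, List.replicate n ⟨0, Nat.pos_of_ne_zero hk⟩, List.length_replicate, rfl⟩ ?_
  rintro _ ⟨w, rfl, rfl⟩
  simpa using le_logb_maxocc (mt List.length_eq_zero_iff.2 hn)

end SubwordEntropy

theorem stmt_4 (k : ℕ) (hk : 2 ≤ k) :
    ∃ c₁ c₂ : ℝ, ∀ n : ℕ, 1 ≤ n → ∀ w : List (Fin k), w.length = n →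
      Real.logb 2 (1 + 1 / k) * n - (1 / 2) * Real.logb 2 n + c₁ ≤ minS k n ∧
      minS k n ≤ Real.logb 2 (maxocc w) ∧
      Real.logb 2 (maxocc w) ≤ n - (1 / 2) * Real.logb 2 n + c₂ := by
  refine ⟨-2, 0, ?_⟩
  rintro n hn w rfl
  have hw : w ≠ [] := List.length_pos_iff.1 hn
  have lower_bound := le_minS (k := k) (by lia) (mt List.length_eq_zero_iff.1 hw)
  have upper_bound := logb_maxocc_le hw
  exact ⟨by linarith, minS_le_logb_maxocc w, by linarith⟩
end

section
/- For every k ≥ 2 and all n, m ≥ 1, minS_k(n + m) ≥ minS_k(n) + minS_k(m); equivalently, the minimum over words w of length n+m of maxocc(w) is at least the product of the corresponding minima for lengths n and m. -/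
/-!
Split a word of length `n + m` as `w₁ ++ w₂` with `|w₁| = n` and `|w₂| = m`. An occurrence of `u₁`
in `w₁` followed by an occurrence of `u₂` in `w₂` is an occurrence of `u₁ ++ u₂` in `w₁ ++ w₂`, and
distinct pairs give distinct occurrences, so `maxocc` is supermultiplicative under concatenation.
Its logarithm is therefore superadditive, and both summands are at least the respective minima.
-/

open List Real

theorem count_product {α β : Type*} [BEq α] [LawfulBEq α] [BEq β] [LawfulBEq β] (a : α) (b : β)
    (l₁ : List α) (l₂ : List β) :
    (l₁ ×ˢ l₂).count (a, b) = l₁.count a * l₂.count b := by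
  induction l₁ with
  | nil => simp
  | cons c l₁ ih =>
    rw [product_cons, count_append, ih, count_cons, add_mul, add_comm]
    congr 1
    obtain rfl | hca := eq_or_ne c a
    · simp [count_map_of_injective l₂ (Prod.mk c) (Prod.mk_right_injective c)]
    · simp [hca, count_eq_zero]

theorem sublists_append_eq_map_product {α : Type*} (l₁ l₂ : List α) :
    (l₁ ++ l₂).sublists = (l₂.sublists ×ˢ l₁.sublists).map fun p ↦ p.2 ++ p.1 := by
  simp [sublists_append, SProd.sprod, List.product, map_flatMap, Function.comp_def]

section Occurrences

variable {α : Type*} [DecidableEq α]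

theorem occ_self_pos (w : List α) : 0 < occ w w :=
  count_pos_iff.2 (mem_sublists.2 (Sublist.refl w))

theorem occ_mul_occ_le_occ_append (w₁ w₂ u₁ u₂ : List α) :
    occ w₁ u₁ * occ w₂ u₂ ≤ occ (w₁ ++ w₂) (u₁ ++ u₂) :=
  calc occ w₁ u₁ * occ w₂ u₂
      = (w₂.sublists ×ˢ w₁.sublists).count (u₂, u₁) := by rw [count_product, mul_comm, occ, occ]
    _ ≤ ((w₂.sublists ×ˢ w₁.sublists).map fun p ↦ p.2 ++ p.1).count (u₁ ++ u₂) :=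
      count_le_count_map (f := fun p : List α × List α ↦ p.2 ++ p.1)
    _ = occ (w₁ ++ w₂) (u₁ ++ u₂) := by rw [occ, sublists_append_eq_map_product]

theorem maxocc_mul_maxocc_le_maxocc_append (w₁ w₂ : List α) :
    maxocc w₁ * maxocc w₂ ≤ maxocc (w₁ ++ w₂) := by
  obtain ⟨u₁, h₁⟩ := exists_occ_eq_maxocc w₁
  obtain ⟨u₂, h₂⟩ := exists_occ_eq_maxocc w₂
  rw [← h₁, ← h₂]
  exact (occ_mul_occ_le_occ_append w₁ w₂ u₁ u₂).trans (occ_le_maxocc _ _)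

end Occurrences

section Entropy

variable {α : Type*} [DecidableEq α]

/-- The subword entropy `S(w) = log₂ (maxocc w)` of a word, whose minimum over the words of
length `n` over `Fin k` is `minS k n`. -/
noncomputable def subwordEntropy (w : List α) : ℝ := logb 2 (maxocc w)

theorem subwordEntropy_nonneg (w : List α) : 0 ≤ subwordEntropy w :=
  logb_nonneg one_lt_two (Nat.one_le_cast.2 (maxocc_pos w))

theorem subwordEntropy_add_le_subwordEntropy_append (w₁ w₂ : List α) :
    subwordEntropy w₁ + subwordEntropy w₂ ≤ subwordEntropy (w₁ ++ w₂) := by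
  have h₁ : (0 : ℝ) < maxocc w₁ := Nat.cast_pos.2 (maxocc_pos w₁)
  have h₂ : (0 : ℝ) < maxocc w₂ := Nat.cast_pos.2 (maxocc_pos w₂)
  calc subwordEntropy w₁ + subwordEntropy w₂
      = logb 2 (maxocc w₁ * maxocc w₂) := (logb_mul h₁.ne' h₂.ne').symm
    _ ≤ logb 2 (maxocc (w₁ ++ w₂)) :=
      logb_le_logb_of_le one_lt_two (mul_pos h₁ h₂)
        (mod_cast maxocc_mul_maxocc_le_maxocc_append w₁ w₂)

variable {k n : ℕ}

theorem minS_le_subwordEntropy {w : List (Fin k)} (hw : w.length = n) :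
    minS k n ≤ subwordEntropy w := by
  refine csInf_le ⟨0, ?_⟩ ⟨w, hw, rfl⟩
  rintro _ ⟨v, -, rfl⟩
  exact subwordEntropy_nonneg v

theorem le_minS_s5 (hk : 0 < k) {s : ℝ}
    (h : ∀ w : List (Fin k), w.length = n → s ≤ subwordEntropy w) : s ≤ minS k n := by
  refine le_csInf ⟨_, replicate n ⟨0, hk⟩, length_replicate, rfl⟩ ?_
  rintro _ ⟨w, hw, rfl⟩
  exact h w hw

end Entropy

theorem stmt_5 (k : ℕ) (hk : 2 ≤ k) (n m : ℕ) (hn : 1 ≤ n) (hm : 1 ≤ m) :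
    minS k (n + m) ≥ minS k n + minS k m := by
  refine le_minS_s5 (zero_lt_two.trans_le hk) fun w hw ↦ ?_
  have hlen_take : (w.take n).length = n := by rw [length_take]; lia
  have hlen_drop : (w.drop n).length = m := by rw [length_drop]; lia
  calc minS k n + minS k m
      ≤ subwordEntropy (w.take n) + subwordEntropy (w.drop n) :=
      add_le_add (minS_le_subwordEntropy hlen_take) (minS_le_subwordEntropy hlen_drop)
    _ ≤ subwordEntropy (w.take n ++ w.drop n) := subwordEntropy_add_le_subwordEntropy_append _ _
    _ = subwordEntropy w := by rw [take_append_drop]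
end
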